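/- arXiv:2504.14392 — 3 statements merged into one kernel-verified Lean document; each statement's English description precedes it below -/
import Mathlib

section
/- Let 0 ≤ l < k ≤ n and define F(λ) := (H_k(λ)/H_l(λ))^{1/(k−l)} on the Gårding cone Γ_k ⊂ ℝⁿ. Then F is concave on Γ_k: for all λ, μ ∈ Γ_k and all t ∈ [0,1] such that (1−t)λ + tμ ∈ Γ_k, one has F((1−t)λ + tμ) ≥ (1−t)F(λ) + tF(μ). -/
/-- The `k`-th elementary symmetric polynomial of `lam : Fin n → ℝ`,
with the conventions `σ₀ = 1` and `σ_k = 0` for `k > n`. -/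
noncomputable def esym (n k : ℕ) (lam : Fin n → ℝ) : ℝ :=
  ∑ s ∈ Finset.powersetCard k (Finset.univ : Finset (Fin n)), ∏ i ∈ s, lam i

/-- The normalized elementary symmetric polynomial `H_k = σ_k / C(n,k)`. -/
noncomputable def Hnorm (n k : ℕ) (lam : Fin n → ℝ) : ℝ :=
  esym n k lam / (n.choose k : ℝ)

/-- The Gårding cone `Γ_k = {λ : σ_i(λ) > 0 for all 1 ≤ i ≤ k}`. -/
def gardingCone (n k : ℕ) : Set (Fin n → ℝ) :=
  {lam | ∀ i : ℕ, 1 ≤ i → i ≤ k → 0 < esym n i lam}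

/-- The quotient function `F = (H_k/H_l)^{1/(k-l)}`. -/
noncomputable def Fquot (n k l : ℕ) (lam : Fin n → ℝ) : ℝ :=
  (Hnorm n k lam / Hnorm n l lam) ^ ((1 : ℝ) / ((k : ℝ) - (l : ℝ)))

/-!
Since the generating polynomial `∏ i, (1 + v i * X)` is real-rooted, so are its derivatives, and
comparing low coefficients gives Newton's inequality; hence deleting a variable maps `Γ_{k+1}` to
`Γ_k`. Euler's identity then expresses `(k + 2) σ_{k+2} / σ_{k+1}` as the sum over `i` of the
parallel sums `v i * q i / (v i + q i)`, where `q i` is `σ_{k+1} / σ_k` in the variables other than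
`v i`. The parallel sum is increasing and superadditive, so by induction every `σ_{k+1} / σ_k` is
superadditive on `Γ_k` (Marcus–Lopes). Finally `F` is the geometric mean of the ratios
`H_{j+1} / H_j`, `l ≤ j < k`; as geometric means preserve superadditivity and `F` is
homogeneous of degree one, `F` is concave.
-/

open Finset

section RealRooted

open Polynomial

theorem splits_derivative {p : ℝ[X]} (hp : p.Splits) : (derivative p).Splits := by
  rw [splits_iff_card_roots] at hp ⊢
  rcases eq_or_ne p.natDegree 0 with h | _
  · simp [derivative_of_natDegree_zero h]
  · have := card_roots_le_derivative p
    have := card_roots' (derivative p)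
    have := natDegree_derivative_le p
    omega

theorem two_mul_coeff_zero_mul_coeff_two_le {R : Type*} [CommRing R] [LinearOrder R]
    [IsStrictOrderedRing R] {p : R[X]} (hp : p.Splits) :
    2 * (p.coeff 0 * p.coeff 2) ≤ p.coeff 1 ^ 2 := by
  induction hp using Submonoid.closure_induction with
  | mem f hf => rcases hf with ⟨a, rfl⟩ | ⟨a, rfl⟩ <;> simp [coeff_C, coeff_X]
  | one => simp [coeff_one]
  | mul f g _ _ hf hg =>
    have coeff_two : (f * g).coeff 2 =
        f.coeff 0 * g.coeff 2 + f.coeff 1 * g.coeff 1 + f.coeff 2 * g.coeff 0 := by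
      simp [coeff_mul, Finset.Nat.sum_antidiagonal_eq_sum_range_succ_mk, sum_range_succ]
    rw [mul_coeff_zero, mul_coeff_one, coeff_two]
    linarith [mul_le_mul_of_nonneg_left hg (sq_nonneg (f.coeff 0)),
      mul_le_mul_of_nonneg_left hf (sq_nonneg (g.coeff 0))]

theorem add_two_mul_coeff_mul_coeff_le {p : ℝ[X]} (hp : p.Splits) (m : ℕ) :
    (m + 2) * (p.coeff m * p.coeff (m + 2)) ≤ (m + 1) * p.coeff (m + 1) ^ 2 := by
  induction m generalizing p with
  | zero => simpa using two_mul_coeff_zero_mul_coeff_two_le hp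
  | succ m ih =>
    have h := ih (splits_derivative hp)
    simp only [coeff_derivative] at h
    push_cast at h ⊢
    have hm : (0 : ℝ) < (m + 1) * (m + 2) := by positivity
    refine le_of_mul_le_mul_left ?_ hm
    linarith

theorem coeff_mul_coeff_add_two_le_sq {p : ℝ[X]} (hp : p.Splits) (m : ℕ) :
    p.coeff m * p.coeff (m + 2) ≤ p.coeff (m + 1) ^ 2 := by
  have h := add_two_mul_coeff_mul_coeff_le hp m
  rcases le_total (p.coeff m * p.coeff (m + 2)) 0 with hneg | hpos
  · exact hneg.trans (sq_nonneg _)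
  · refine le_of_mul_le_mul_left ?_ (m.cast_add_one_pos (α := ℝ))
    linarith

end RealRooted

section ElementarySymmetric

variable {ι R : Type*} [CommSemiring R]

/-- The `j`-th elementary symmetric polynomial in the variables `v i`, `i ∈ s`. Restricting the
variables to a finset makes it possible to delete one of them, as `esymmOn (s.erase i) j v`. -/
def esymmOn (s : Finset ι) (j : ℕ) (v : ι → R) : R :=
  (s.val.map v).esymm j

theorem esymmOn_eq_sum (s : Finset ι) (j : ℕ) (v : ι → R) :
    esymmOn s j v = ∑ t ∈ s.powersetCard j, ∏ i ∈ t, v i :=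
  esymm_map_val v s j

theorem esymmOn_zero (s : Finset ι) (v : ι → R) : esymmOn s 0 v = 1 := by
  simp [esymmOn_eq_sum]

theorem esymmOn_one (s : Finset ι) (v : ι → R) : esymmOn s 1 v = ∑ i ∈ s, v i := by
  simp [esymmOn_eq_sum, powersetCard_one]

theorem esymmOn_smul (s : Finset ι) (j : ℕ) (c : R) (v : ι → R) :
    esymmOn s j (c • v) = c ^ j * esymmOn s j v := by
  simpa [esymmOn, Function.comp_def] using ((s.val.map v).pow_smul_esymm c j).symm

open Polynomial in
theorem coeff_prod_one_add_C_mul_X (s : Finset ι) (v : ι → R) (j : ℕ) :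
    (∏ i ∈ s, (1 + C (v i) * X)).coeff j = esymmOn s j v := by
  simp_rw [prod_one_add, prod_mul_distrib, prod_const, ← map_prod, finsetSum_coeff,
    coeff_C_mul_X_pow, ← sum_filter, esymmOn_eq_sum, powersetCard_eq_filter, eq_comm]

open Polynomial in
theorem esymmOn_mul_esymmOn_add_two_le_sq (s : Finset ι) (j : ℕ) (v : ι → ℝ) :
    esymmOn s j v * esymmOn s (j + 2) v ≤ esymmOn s (j + 1) v ^ 2 := by
  simp_rw [← coeff_prod_one_add_C_mul_X]
  refine coeff_mul_coeff_add_two_le_sq (Splits.prod fun i _ ↦ ?_) j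
  exact .of_natDegree_le_one (by compute_degree)

variable [DecidableEq ι]

theorem esymmOn_succ_eq_erase {s : Finset ι} {i : ι} (hi : i ∈ s) (j : ℕ) (v : ι → R) :
    esymmOn s (j + 1) v = esymmOn (s.erase i) (j + 1) v + v i * esymmOn (s.erase i) j v := by
  simp_rw [← coeff_prod_one_add_C_mul_X, ← mul_prod_erase s _ hi]
  simp [add_mul, mul_assoc]

-- Compare the coefficients of the derivative of the generating polynomial.
open Polynomial in
theorem succ_mul_esymmOn_succ (s : Finset ι) (j : ℕ) (v : ι → R) :
    (j + 1) * esymmOn s (j + 1) v = ∑ i ∈ s, v i * esymmOn (s.erase i) j v := by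
  have derivative_factor (i : ι) : derivative (1 + C (v i) * X) = C (v i) := by simp
  have h := coeff_derivative (∏ i ∈ s, (1 + C (v i) * X)) j
  simp_rw [derivative_prod_finset, derivative_factor, finsetSum_coeff, coeff_mul_C,
    coeff_prod_one_add_C_mul_X] at h
  simpa only [mul_comm] using h.symm

end ElementarySymmetric

section GardingCone

variable {ι : Type*}

/-- The Gårding cone `Γ_k` in the variables indexed by `s`. Unlike in `gardingCone`, the condition
on `j = 0` is included; it holds because `σ₀ = 1`. -/
def gardingConeOn (s : Finset ι) (k : ℕ) : Set (ι → ℝ) :=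
  {v | ∀ j ≤ k, 0 < esymmOn s j v}

theorem gardingConeOn_antitone (s : Finset ι) : Antitone (gardingConeOn s) :=
  fun _ _ hkm _ hv j hj ↦ hv j (hj.trans hkm)

theorem mem_gardingConeOn_succ {s : Finset ι} {k : ℕ} {v : ι → ℝ} :
    v ∈ gardingConeOn s (k + 1) ↔ v ∈ gardingConeOn s k ∧ 0 < esymmOn s (k + 1) v := by
  simp only [gardingConeOn, Set.mem_ofPred_eq, Nat.le_succ_iff, or_imp, forall_and, forall_eq]

theorem smul_mem_gardingConeOn {s : Finset ι} {k : ℕ} {v : ι → ℝ} {c : ℝ} (hc : 0 < c)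
    (hv : v ∈ gardingConeOn s k) : c • v ∈ gardingConeOn s k := fun j hj ↦ by
  rw [esymmOn_smul]
  exact mul_pos (pow_pos hc j) (hv j hj)

theorem mem_gardingConeOn_erase [DecidableEq ι] {s : Finset ι} {i : ι} (hi : i ∈ s) {k : ℕ}
    {v : ι → ℝ} (hv : v ∈ gardingConeOn s (k + 1)) : v ∈ gardingConeOn (s.erase i) k := by
  intro j hj
  induction j with
  | zero => simp [esymmOn_zero]
  | succ j ih =>
    have ha := ih (by omega)
    have hab := hv (j + 1) (by omega)
    have hbc := hv (j + 2) (by omega)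
    rw [esymmOn_succ_eq_erase hi] at hab hbc
    have newton := esymmOn_mul_esymmOn_add_two_le_sq (s.erase i) j v
    set a := esymmOn (s.erase i) j v
    set b := esymmOn (s.erase i) (j + 1) v
    set c := esymmOn (s.erase i) (j + 2) v
    by_contra! hb
    have : b ^ 2 < a * c := calc
      b ^ 2 ≤ b ^ 2 - b * (b + v i * a) := by
        linarith [mul_nonpos_of_nonpos_of_nonneg hb hab.le]
      _ < b ^ 2 - b * (b + v i * a) + a * (c + v i * b) := by linarith [mul_pos ha hbc]
      _ = a * c := by ring
    linarith

end GardingCone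

section ParallelSum

variable {K : Type*} [Field K] [LinearOrder K] [IsStrictOrderedRing K]

theorem mul_div_add_le_mul_div_add {x y z : K} (hxy : 0 < x + y) (hyz : y ≤ z) :
    x * y / (x + y) ≤ x * z / (x + z) := by
  have hxz : 0 < x + z := by linarith
  rw [div_le_div_iff₀ hxy hxz]
  linarith [mul_le_mul_of_nonneg_left hyz (sq_nonneg x)]

theorem mul_div_add_superadd {x₁ y₁ x₂ y₂ : K} (h₁ : 0 < x₁ + y₁) (h₂ : 0 < x₂ + y₂) :
    x₁ * y₁ / (x₁ + y₁) + x₂ * y₂ / (x₂ + y₂) ≤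
      (x₁ + x₂) * (y₁ + y₂) / (x₁ + x₂ + (y₁ + y₂)) := by
  have h : 0 < x₁ + x₂ + (y₁ + y₂) := by linarith
  have defect : (x₁ + x₂) * (y₁ + y₂) / (x₁ + x₂ + (y₁ + y₂)) -
      (x₁ * y₁ / (x₁ + y₁) + x₂ * y₂ / (x₂ + y₂)) =
      (x₁ * y₂ - x₂ * y₁) ^ 2 /
        ((x₁ + y₁) * (x₂ + y₂) * (x₁ + x₂ + (y₁ + y₂))) := by
    field_simp
    ring
  rw [← sub_nonneg, defect]
  positivity

end ParallelSum

section Ratio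

variable {ι : Type*}

/-- The ratio `σ_{k+1} / σ_k` of consecutive elementary symmetric polynomials in the variables
`v i`, `i ∈ s`. -/
noncomputable def esymmRatio {K : Type*} [Field K] (s : Finset ι) (k : ℕ) (v : ι → K) : K :=
  esymmOn s (k + 1) v / esymmOn s k v

theorem esymmRatio_pos {s : Finset ι} {k : ℕ} {v : ι → ℝ} (hv : v ∈ gardingConeOn s (k + 1)) :
    0 < esymmRatio s k v :=
  div_pos (hv (k + 1) le_rfl) (hv k k.le_succ)

theorem add_esymmRatio_erase [DecidableEq ι] {K : Type*} [Field K] {s : Finset ι} {i : ι}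
    (hi : i ∈ s) {k : ℕ} {v : ι → K} (h : esymmOn (s.erase i) k v ≠ 0) :
    v i + esymmRatio (s.erase i) k v = esymmOn s (k + 1) v / esymmOn (s.erase i) k v := by
  rw [esymmRatio, esymmOn_succ_eq_erase hi, add_div, mul_div_cancel_right₀ _ h, add_comm]

theorem add_two_mul_esymmRatio_succ [DecidableEq ι] {K : Type*} [Field K] {s : Finset ι} {k : ℕ}
    {v : ι → K} (h : ∀ i ∈ s, esymmOn (s.erase i) k v ≠ 0) :
    (k + 2) * esymmRatio s (k + 1) v =
      ∑ i ∈ s, v i * esymmRatio (s.erase i) k v / (v i + esymmRatio (s.erase i) k v) := by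
  have euler := succ_mul_esymmOn_succ s (k + 1) v
  rw [Nat.cast_succ, add_assoc, one_add_one_eq_two] at euler
  rw [esymmRatio, ← mul_div_assoc, euler, sum_div]
  refine sum_congr rfl fun i hi ↦ ?_
  rw [add_esymmRatio_erase hi (h i hi), esymmRatio, ← mul_div_assoc,
    div_div_div_cancel_right₀ (h i hi)]

theorem add_esymmRatio_erase_pos [DecidableEq ι] {s : Finset ι} {i : ι} (hi : i ∈ s) {k : ℕ}
    {v : ι → ℝ} (hv : v ∈ gardingConeOn s (k + 1)) : 0 < v i + esymmRatio (s.erase i) k v := by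
  have h := mem_gardingConeOn_erase hi hv k le_rfl
  rw [add_esymmRatio_erase hi h.ne']
  exact div_pos (hv (k + 1) le_rfl) h

theorem esymmRatio_superadd_of_add_mem {s : Finset ι} {k : ℕ} {v w : ι → ℝ}
    (hv : v ∈ gardingConeOn s k) (hw : w ∈ gardingConeOn s k) (hvw : v + w ∈ gardingConeOn s k) :
    esymmRatio s k v + esymmRatio s k w ≤ esymmRatio s k (v + w) := by
  classical
  induction k generalizing s with
  | zero => simp [esymmRatio, esymmOn_zero, esymmOn_one, sum_add_distrib]
  | succ k ih =>
    have erase_ne_zero {u : ι → ℝ} (hu : u ∈ gardingConeOn s (k + 1)) :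
        ∀ i ∈ s, esymmOn (s.erase i) k u ≠ 0 :=
      fun i hi ↦ (mem_gardingConeOn_erase hi hu k le_rfl).ne'
    have hk : (0 : ℝ) < k + 2 := by positivity
    refine le_of_mul_le_mul_left ?_ hk
    rw [mul_add, add_two_mul_esymmRatio_succ (erase_ne_zero hv),
      add_two_mul_esymmRatio_succ (erase_ne_zero hw),
      add_two_mul_esymmRatio_succ (erase_ne_zero hvw), ← sum_add_distrib]
    refine sum_le_sum fun i hi ↦ ?_
    have hv_pos := add_esymmRatio_erase_pos hi hv
    have hw_pos := add_esymmRatio_erase_pos hi hw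
    refine (mul_div_add_superadd hv_pos hw_pos).trans ?_
    refine mul_div_add_le_mul_div_add (by linarith) ?_
    exact ih (mem_gardingConeOn_erase hi hv) (mem_gardingConeOn_erase hi hw)
      (mem_gardingConeOn_erase hi hvw)

theorem add_mem_gardingConeOn {s : Finset ι} {k : ℕ} {v w : ι → ℝ}
    (hv : v ∈ gardingConeOn s k) (hw : w ∈ gardingConeOn s k) : v + w ∈ gardingConeOn s k := by
  induction k with
  | zero => simp [gardingConeOn, esymmOn_zero]
  | succ k ih =>
    have hv' := gardingConeOn_antitone s k.le_succ hv
    have hw' := gardingConeOn_antitone s k.le_succ hw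
    have hvw := ih hv' hw'
    have ratio_pos : 0 < esymmRatio s k (v + w) :=
      (add_pos (esymmRatio_pos hv) (esymmRatio_pos hw)).trans_le
        (esymmRatio_superadd_of_add_mem hv' hw' hvw)
    exact mem_gardingConeOn_succ.2 ⟨hvw, (div_pos_iff_of_pos_right (hvw k le_rfl)).1 ratio_pos⟩

theorem esymmRatio_superadd {s : Finset ι} {k : ℕ} {v w : ι → ℝ}
    (hv : v ∈ gardingConeOn s k) (hw : w ∈ gardingConeOn s k) :
    esymmRatio s k v + esymmRatio s k w ≤ esymmRatio s k (v + w) :=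
  esymmRatio_superadd_of_add_mem hv hw (add_mem_gardingConeOn hv hw)

end Ratio

-- Apply AM-GM to the families `a i / (a i + b i)` and `b i / (a i + b i)` and add.
theorem geom_mean_weighted_superadd {ι : Type*} (s : Finset ι) {p a b : ι → ℝ}
    (hp : ∀ i ∈ s, 0 ≤ p i) (hp_sum : ∑ i ∈ s, p i = 1)
    (ha : ∀ i ∈ s, 0 ≤ a i) (hb : ∀ i ∈ s, 0 ≤ b i) :
    ∏ i ∈ s, a i ^ p i + ∏ i ∈ s, b i ^ p i ≤ ∏ i ∈ s, (a i + b i) ^ p i := by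
  set P := ∏ i ∈ s, (a i + b i) ^ p i
  have hc : ∀ i ∈ s, 0 ≤ a i + b i := fun i hi ↦ add_nonneg (ha i hi) (hb i hi)
  have hP : 0 ≤ P := prod_nonneg fun i hi ↦ Real.rpow_nonneg (hc i hi) _
  have le_arith_mean {z : ι → ℝ} (hz : ∀ i ∈ s, 0 ≤ z i) (hzc : ∀ i ∈ s, z i ≤ a i + b i) :
      ∏ i ∈ s, z i ^ p i ≤ P * ∑ i ∈ s, p i * (z i / (a i + b i)) := by
    have hzdiv : ∀ i ∈ s, 0 ≤ z i / (a i + b i) := fun i hi ↦ div_nonneg (hz i hi) (hc i hi)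
    calc ∏ i ∈ s, z i ^ p i = P * ∏ i ∈ s, (z i / (a i + b i)) ^ p i := by
          rw [← prod_mul_distrib]
          refine prod_congr rfl fun i hi ↦ ?_
          rw [← Real.mul_rpow (hc i hi) (hzdiv i hi), mul_div_cancel_of_imp']
          exact fun h ↦ le_antisymm (h ▸ hzc i hi) (hz i hi)
      _ ≤ P * ∑ i ∈ s, p i * (z i / (a i + b i)) := by
          gcongr
          exact Real.geom_mean_le_arith_mean_weighted s p _ hp hp_sum hzdiv
  calc ∏ i ∈ s, a i ^ p i + ∏ i ∈ s, b i ^ p i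
      ≤ P * ∑ i ∈ s, p i * (a i / (a i + b i)) + P * ∑ i ∈ s, p i * (b i / (a i + b i)) :=
        add_le_add (le_arith_mean ha fun i hi ↦ le_add_of_nonneg_right (hb i hi))
          (le_arith_mean hb fun i hi ↦ le_add_of_nonneg_left (ha i hi))
    _ = P * ∑ i ∈ s, p i * ((a i + b i) / (a i + b i)) := by
        rw [← mul_add, ← sum_add_distrib]
        simp_rw [← mul_add, ← add_div]
    _ ≤ P * ∑ i ∈ s, p i := by
        gcongr with i hi
        exact mul_le_of_le_one_right (hp i hi) (div_self_le_one _)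
    _ = P := by rw [hp_sum, mul_one]

theorem prod_Ico_div_of_ne_zero {G₀ : Type*} [CommGroupWithZero G₀] {f : ℕ → G₀} {m n : ℕ}
    (hmn : m ≤ n) (hf : ∀ j ∈ Icc m n, f j ≠ 0) :
    ∏ j ∈ Ico m n, f (j + 1) / f j = f n / f m := by
  induction n, hmn using Nat.le_induction with
  | base => simp [hf m (by simp)]
  | succ n hmn ih =>
    rw [prod_Ico_succ_top hmn, ih fun j hj ↦ hf j (Icc_subset_Icc_right n.le_succ hj),
      mul_comm, div_mul_div_cancel₀ (hf n (by simp [hmn]))]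

section Quotient

variable {n k l : ℕ} {v w : Fin n → ℝ}

theorem esym_eq_esymmOn_univ (n k : ℕ) (v : Fin n → ℝ) : esym n k v = esymmOn univ k v :=
  (esymmOn_eq_sum univ k v).symm

theorem gardingCone_eq_gardingConeOn_univ (n k : ℕ) : gardingCone n k = gardingConeOn univ k := by
  ext v
  simp only [gardingCone, esym_eq_esymmOn_univ]
  refine ⟨fun hv j hj ↦ ?_, fun hv j _ hj ↦ hv j hj⟩
  rcases j.eq_zero_or_pos with rfl | hj_pos
  · simp [esymmOn_zero]
  · exact hv j hj_pos hj

theorem add_mem_gardingCone (hv : v ∈ gardingCone n k) (hw : w ∈ gardingCone n k) :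
    v + w ∈ gardingCone n k := by
  rw [gardingCone_eq_gardingConeOn_univ] at *
  exact add_mem_gardingConeOn hv hw

theorem smul_mem_gardingCone {c : ℝ} (hc : 0 < c) (hv : v ∈ gardingCone n k) :
    c • v ∈ gardingCone n k := by
  rw [gardingCone_eq_gardingConeOn_univ] at *
  exact smul_mem_gardingConeOn hc hv

theorem Hnorm_pos {j : ℕ} (hjk : j ≤ k) (hkn : k ≤ n) (hv : v ∈ gardingCone n k) :
    0 < Hnorm n j v := by
  rw [gardingCone_eq_gardingConeOn_univ] at hv
  rw [Hnorm, esym_eq_esymmOn_univ]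
  have := Nat.choose_pos (hjk.trans hkn)
  exact div_pos (hv j hjk) (by positivity)

theorem Hnorm_smul (n j : ℕ) (c : ℝ) (v : Fin n → ℝ) :
    Hnorm n j (c • v) = c ^ j * Hnorm n j v := by
  rw [Hnorm, Hnorm, esym_eq_esymmOn_univ, esym_eq_esymmOn_univ, esymmOn_smul, mul_div_assoc]

theorem Hnorm_succ_div_Hnorm (n j : ℕ) (v : Fin n → ℝ) :
    Hnorm n (j + 1) v / Hnorm n j v =
      n.choose j / n.choose (j + 1) * esymmRatio univ j v := by
  rw [Hnorm, Hnorm, esym_eq_esymmOn_univ, esym_eq_esymmOn_univ, div_div_div_comm, esymmRatio,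
    div_eq_mul_inv, inv_div, mul_comm]

theorem Hnorm_succ_div_Hnorm_superadd {j : ℕ} (hjk : j ≤ k) (hv : v ∈ gardingCone n k)
    (hw : w ∈ gardingCone n k) :
    Hnorm n (j + 1) v / Hnorm n j v + Hnorm n (j + 1) w / Hnorm n j w ≤
      Hnorm n (j + 1) (v + w) / Hnorm n j (v + w) := by
  rw [gardingCone_eq_gardingConeOn_univ] at hv hw
  simp_rw [Hnorm_succ_div_Hnorm, ← mul_add]
  gcongr
  exact esymmRatio_superadd (gardingConeOn_antitone univ hjk hv)
    (gardingConeOn_antitone univ hjk hw)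

theorem Hnorm_succ_div_Hnorm_nonneg {j : ℕ} (hj : j ∈ Ico l k) (hkn : k ≤ n)
    (hv : v ∈ gardingCone n k) : 0 ≤ Hnorm n (j + 1) v / Hnorm n j v :=
  have hjk := (mem_Ico.1 hj).2
  (div_pos (Hnorm_pos hjk hkn hv) (Hnorm_pos hjk.le hkn hv)).le

theorem Fquot_eq_prod (hlk : l ≤ k) (hkn : k ≤ n) (hv : v ∈ gardingCone n k) :
    Fquot n k l v =
      ∏ j ∈ Ico l k, (Hnorm n (j + 1) v / Hnorm n j v) ^ ((1 : ℝ) / ((k : ℝ) - (l : ℝ))) := by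
  rw [Real.finsetProd_rpow _ _ fun j hj ↦ Hnorm_succ_div_Hnorm_nonneg hj hkn hv,
    prod_Ico_div_of_ne_zero (f := (Hnorm n · v)) hlk
      fun j hj ↦ (Hnorm_pos (mem_Icc.1 hj).2 hkn hv).ne', Fquot]

theorem Fquot_smul (hlk : l < k) (hkn : k ≤ n) (hv : v ∈ gardingCone n k) {c : ℝ} (hc : 0 < c) :
    Fquot n k l (c • v) = c * Fquot n k l v := by
  have hkl : (k : ℝ) - l ≠ 0 := (sub_pos.2 (Nat.cast_lt.2 hlk)).ne'
  have hH : 0 ≤ Hnorm n k v / Hnorm n l v :=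
    (div_pos (Hnorm_pos le_rfl hkn hv) (Hnorm_pos hlk.le hkn hv)).le
  have ratio_smul : Hnorm n k (c • v) / Hnorm n l (c • v) =
      c ^ ((k : ℝ) - l) * (Hnorm n k v / Hnorm n l v) := by
    rw [Hnorm_smul, Hnorm_smul, mul_div_mul_comm, Real.rpow_sub hc, Real.rpow_natCast,
      Real.rpow_natCast]
  rw [Fquot, ratio_smul, Real.mul_rpow (by positivity) hH, ← Real.rpow_mul hc.le,
    mul_one_div_cancel hkl, Real.rpow_one, Fquot]

theorem Fquot_superadd (hlk : l < k) (hkn : k ≤ n) (hv : v ∈ gardingCone n k)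
    (hw : w ∈ gardingCone n k) : Fquot n k l v + Fquot n k l w ≤ Fquot n k l (v + w) := by
  have hkl : (0 : ℝ) < (k : ℝ) - l := sub_pos.2 (Nat.cast_lt.2 hlk)
  have weights_sum : ∑ _j ∈ Ico l k, (1 : ℝ) / ((k : ℝ) - l) = 1 := by
    rw [sum_const, Nat.card_Ico, nsmul_eq_mul, Nat.cast_sub hlk.le, mul_one_div_cancel hkl.ne']
  rw [Fquot_eq_prod hlk.le hkn hv, Fquot_eq_prod hlk.le hkn hw,
    Fquot_eq_prod hlk.le hkn (add_mem_gardingCone hv hw)]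
  have hv_nonneg := fun j (hj : j ∈ Ico l k) ↦ Hnorm_succ_div_Hnorm_nonneg hj hkn hv
  have hw_nonneg := fun j (hj : j ∈ Ico l k) ↦ Hnorm_succ_div_Hnorm_nonneg hj hkn hw
  refine (geom_mean_weighted_superadd _ (fun _ _ ↦ by positivity) weights_sum hv_nonneg
    hw_nonneg).trans (prod_le_prod (fun j hj ↦ ?_) fun j hj ↦ ?_)
  · exact Real.rpow_nonneg (add_nonneg (hv_nonneg j hj) (hw_nonneg j hj)) _
  · exact Real.rpow_le_rpow (add_nonneg (hv_nonneg j hj) (hw_nonneg j hj))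
      (Hnorm_succ_div_Hnorm_superadd (mem_Ico.1 hj).2.le hv hw) (by positivity)

end Quotient

/-- Concavity of `F = (H_k/H_l)^{1/(k-l)}` on the Gårding cone `Γ_k`, for
`0 ≤ l < k ≤ n`. -/
theorem Fquot_concave (n k l : ℕ) (hlk : l < k) (hkn : k ≤ n)
    (lam mu : Fin n → ℝ) (hlam : lam ∈ gardingCone n k) (hmu : mu ∈ gardingCone n k)
    (t : ℝ) (ht : t ∈ Set.Icc (0 : ℝ) 1)
    (hmix : (1 - t) • lam + t • mu ∈ gardingCone n k) :
    (1 - t) * Fquot n k l lam + t * Fquot n k l mu ≤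
      Fquot n k l ((1 - t) • lam + t • mu) := by
  rcases ht.1.eq_or_lt with rfl | ht_pos
  · simp
  rcases ht.2.eq_or_lt with rfl | ht_lt
  · simp
  have ht_compl : 0 < 1 - t := sub_pos.2 ht_lt
  rw [← Fquot_smul hlk hkn hlam ht_compl, ← Fquot_smul hlk hkn hmu ht_pos]
  exact Fquot_superadd hlk hkn (smul_mem_gardingCone ht_compl hlam)
    (smul_mem_gardingCone ht_pos hmu)
end

section
/- Let n ≥ 1, 1 ≤ k ≤ n, c > 0, and let λ ∈ ℝⁿ have all entries strictly positive and satisfy σ_n(λ) = c·σ_{n−k}(λ). Then σ_n(λ) ≥ (C(n,k)·c)^{n/k}, where C(n,k) is the binomial coefficient. -/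
/-!
By AM-GM, `σ_m` is at least `C(n,m)` times the geometric mean of the `m`-fold products. Each `λ_i`
occurs in `C(n-1,m-1)` of them, a fraction `m/n` of the total, so this geometric mean is
`σ_n ^ (m/n)`. For `m = n - k`, comparison with `c σ_{n-k} ≤ σ_n` gives `C(n,k) c ≤ σ_n ^ (k/n)`.
-/

open Finset

variable {ι : Type*}

lemma prod_powersetCard_succ_prod {M : Type*} [CommMonoid M] (s : Finset ι) (m : ℕ) (f : ι → M) :
    ∏ t ∈ s.powersetCard (m + 1), ∏ i ∈ t, f i = (∏ i ∈ s, f i) ^ (#s - 1).choose m := by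
  classical
  have card_filter_mem : ∀ i ∈ s, #{t ∈ s.powersetCard (m + 1) | i ∈ t} = (#s - 1).choose m := by
    intro i hi
    simpa using card_filter_powersetCard_subset {i} s (m + 1) (singleton_subset_iff.2 hi) (by simp)
  calc ∏ t ∈ s.powersetCard (m + 1), ∏ i ∈ t, f i
      = ∏ i ∈ s, ∏ t ∈ s.powersetCard (m + 1) with i ∈ t, f i := by
        refine prod_comm' fun t i => ?_
        simp only [mem_powersetCard, mem_filter]
        exact ⟨fun ⟨ht, hi⟩ => ⟨⟨ht, hi⟩, ht.1 hi⟩, fun ⟨h, _⟩ => h⟩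
    _ = ∏ i ∈ s, f i ^ (#s - 1).choose m :=
        prod_congr rfl fun i hi => by rw [prod_const, card_filter_mem i hi]
    _ = (∏ i ∈ s, f i) ^ (#s - 1).choose m := prod_pow ..

lemma card_mul_prod_rpow_inv_card_le_sum (s : Finset ι) {f : ι → ℝ} (hf : ∀ i ∈ s, 0 ≤ f i) :
    #s * (∏ i ∈ s, f i) ^ (#s : ℝ)⁻¹ ≤ ∑ i ∈ s, f i := by
  obtain rfl | hs := s.eq_empty_or_nonempty
  · simp
  have hcard : (0 : ℝ) < #s := by exact_mod_cast hs.card_pos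
  have amgm := Real.geom_mean_le_arith_mean s (fun _ => 1) f (by simp) (by simpa using hs) hf
  simp only [Real.rpow_one, sum_const, nsmul_eq_mul, mul_one, one_mul] at amgm
  exact (le_div_iff₀' hcard).1 amgm

lemma choose_mul_prod_rpow_le_sum_powersetCard_prod (s : Finset ι) (m : ℕ) {f : ι → ℝ}
    (hf : ∀ i ∈ s, 0 ≤ f i) :
    (#s).choose m * (∏ i ∈ s, f i) ^ ((m : ℝ) / #s) ≤ ∑ t ∈ s.powersetCard m, ∏ i ∈ t, f i := by
  have prod_nonneg_of_mem : ∀ t ∈ s.powersetCard m, 0 ≤ ∏ i ∈ t, f i := fun t ht =>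
    prod_nonneg fun i hi => hf i ((mem_powersetCard.1 ht).1 hi)
  obtain hm | hm := lt_or_ge (#s) m
  · simpa [Nat.choose_eq_zero_of_lt hm] using sum_nonneg prod_nonneg_of_mem
  obtain _ | m := m
  · simp
  have exponent_eq : ((#s - 1).choose m : ℝ) * ((#s).choose (m + 1) : ℝ)⁻¹ =
      ((m + 1 : ℕ) : ℝ) / #s := by
    have hchoose : ((#s).choose (m + 1) : ℝ) ≠ 0 := by exact_mod_cast (Nat.choose_pos hm).ne'
    have hcard : (#s : ℝ) ≠ 0 := by exact_mod_cast (Nat.zero_lt_of_lt hm).ne'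
    have absorption : #s * (#s - 1).choose m = (#s).choose (m + 1) * (m + 1) := by
      simpa [Nat.sub_add_cancel (Nat.one_le_of_lt hm)] using Nat.add_one_mul_choose_eq (#s - 1) m
    rw [← div_eq_mul_inv, div_eq_div_iff hchoose hcard, mul_comm, mul_comm ((m + 1 : ℕ) : ℝ)]
    exact_mod_cast absorption
  have amgm := card_mul_prod_rpow_inv_card_le_sum _ prod_nonneg_of_mem
  rwa [prod_powersetCard_succ_prod, card_powersetCard, ← Real.rpow_natCast_mul (prod_nonneg hf),
    exponent_eq] at amgm

lemma esym_self (n : ℕ) (lam : Fin n → ℝ) : esym n n lam = ∏ i, lam i := by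
  have powersetCard_univ : powersetCard n (univ : Finset (Fin n)) = {univ} := by
    simpa using powersetCard_self (univ : Finset (Fin n))
  rw [esym, powersetCard_univ, sum_singleton]

theorem esym_top_lower_bound_general (s : Finset ι) {k : ℕ} (hk1 : 1 ≤ k) (hks : k ≤ #s)
    {c : ℝ} (hc : 0 ≤ c) {lam : ι → ℝ} (hpos : ∀ i ∈ s, 0 < lam i)
    (hle : c * ∑ t ∈ s.powersetCard (#s - k), ∏ i ∈ t, lam i ≤ ∏ i ∈ s, lam i) :
    ((#s).choose k * c) ^ ((#s : ℝ) / k) ≤ ∏ i ∈ s, lam i := by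
  set P := ∏ i ∈ s, lam i
  have hP : 0 < P := prod_pos hpos
  have hk : (0 : ℝ) < k := by exact_mod_cast hk1
  have hs : (0 : ℝ) < #s := by exact_mod_cast hk1.trans hks
  have maclaurin :=
    choose_mul_prod_rpow_le_sum_powersetCard_prod s (#s - k) fun i hi => (hpos i hi).le
  rw [Nat.choose_symm hks] at maclaurin
  have choose_mul_le : (#s).choose k * c ≤ P ^ ((k : ℝ) / #s) := by
    refine le_of_mul_le_mul_right ?_ (Real.rpow_pos_of_pos hP (((#s - k : ℕ) : ℝ) / #s))
    calc (#s).choose k * c * P ^ (((#s - k : ℕ) : ℝ) / #s)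
        = c * ((#s).choose k * P ^ (((#s - k : ℕ) : ℝ) / #s)) := by ring
      _ ≤ c * ∑ t ∈ s.powersetCard (#s - k), ∏ i ∈ t, lam i := by gcongr
      _ ≤ P := hle
      _ = P ^ ((k : ℝ) / #s) * P ^ (((#s - k : ℕ) : ℝ) / #s) := by
        rw [← Real.rpow_add hP, ← add_div, ← Nat.cast_add, Nat.add_sub_cancel' hks,
          div_self hs.ne', Real.rpow_one]
  rwa [← Real.le_rpow_inv_iff_of_pos (by positivity) hP.le (by positivity), inv_div]

/-- If `1 ≤ k ≤ n`, `c > 0`, `λ` has all entries positive and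
`σ_n(λ) = c·σ_{n−k}(λ)`, then `σ_n(λ) ≥ (C(n,k)·c)^{n/k}`. -/
theorem esym_top_lower_bound (n k : ℕ) (hn : 1 ≤ n) (hk1 : 1 ≤ k) (hkn : k ≤ n)
    (c : ℝ) (hc : 0 < c) (lam : Fin n → ℝ) (hpos : ∀ i, 0 < lam i)
    (heq : esym n n lam = c * esym n (n - k) lam) :
    ((n.choose k : ℝ) * c) ^ ((n : ℝ) / (k : ℝ)) ≤ esym n n lam := by
  rw [esym_self] at heq ⊢
  simpa using esym_top_lower_bound_general univ hk1 (by simpa using hkn) hc.le (fun i _ => hpos i)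
    (by simpa [esym] using heq.ge)
end

section
/- Let n ≥ 1, 1 ≤ k ≤ n, and λ ∈ ℝⁿ. For t ∈ ℝ write 𝟙 + tλ := (1 + tλ₁, …, 1 + tλ_n), and define Q(t) := H_n(𝟙 + tλ)/H_{n−k}(𝟙 + tλ) on a neighborhood of t = 0 (on which the denominator is positive). Then Q(0) = 1, Q′(0) = k·H₁(λ), and Q″(0) = k(2n − k − 1)·H₂(λ) − 2k(n − k)·H₁(λ)². In particular, the coefficient of H₁(λ)² in the second-order Taylor coefficient a₂ = Q″(0)/2 equals −k(n−k). -/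
/-- The curvature quotient `Q(t) = H_n(𝟙 + tλ)/H_{n−k}(𝟙 + tλ)` of the perturbed
hypersurface. -/
noncomputable def Qfun (n k : ℕ) (lam : Fin n → ℝ) (t : ℝ) : ℝ :=
  Hnorm n n (fun i => 1 + t * lam i) / Hnorm n (n - k) (fun i => 1 + t * lam i)

/-!
Counting the `m`-subsets that contain a given `j`-subset gives the generating identity
`H_m(𝟙 + tλ) = ∑ j, C(m, j) H_j(λ) t ^ j` for `m ≤ n`, so the `j`-th derivative of `t ↦ H_m(𝟙 + tλ)`
at `0` is `m (m - 1) ⋯ (m - j + 1) H_j(λ)`. The quotient rule, applied twice to `H_n / H_{n-k}`,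
then gives the expansion.
-/

open Finset Filter Topology

theorem sum_powersetCard_prod_one_add {ι R : Type*} [CommSemiring R] (A : Finset ι) (m : ℕ)
    (f : ι → R) :
    ∑ s ∈ A.powersetCard m, ∏ i ∈ s, (1 + f i) =
      ∑ j ∈ range (m + 1), ((#A - j).choose (m - j) : R) *
        ∑ u ∈ A.powersetCard j, ∏ i ∈ u, f i := by
  classical
  have expand : ∀ s ∈ A.powersetCard m, ∏ i ∈ s, (1 + f i) =
      ∑ j ∈ range (m + 1), ∑ u ∈ s.powersetCard j, ∏ i ∈ u, f i := fun s hs => by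
    rw [prod_one_add, sum_powerset, (mem_powersetCard.1 hs).2]
  have swap (j : ℕ) : ∑ s ∈ A.powersetCard m, ∑ u ∈ s.powersetCard j, ∏ i ∈ u, f i =
      ∑ u ∈ A.powersetCard j, ∑ s ∈ A.powersetCard m with u ⊆ s, ∏ i ∈ u, f i := by
    refine sum_comm' fun s u => ?_
    simp only [mem_powersetCard, mem_filter]
    exact ⟨fun ⟨hs, hus, hu⟩ => ⟨⟨hs, hus⟩, hus.trans hs.1, hu⟩,
      fun ⟨⟨hs, hus⟩, _, hu⟩ => ⟨hs, hus, hu⟩⟩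
  rw [sum_congr rfl expand, sum_comm]
  refine sum_congr rfl fun j hj => ?_
  rw [swap, mul_sum]
  refine sum_congr rfl fun u hu => ?_
  obtain ⟨huA, rfl⟩ := mem_powersetCard.1 hu
  rw [sum_const, card_filter_powersetCard_subset u A m huA (mem_range_succ_iff.1 hj), nsmul_eq_mul]

section

variable {n m : ℕ} (lam : Fin n → ℝ)

theorem esym_one_add_mul (t : ℝ) :
    esym n m (fun i => 1 + t * lam i) =
      ∑ j ∈ range (m + 1), ((n - j).choose (m - j) : ℝ) * esym n j lam * t ^ j := by
  rw [esym, sum_powersetCard_prod_one_add, card_fin]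
  refine sum_congr rfl fun j _ => ?_
  rw [esym, mul_assoc, sum_mul]
  congr 1
  refine sum_congr rfl fun u hu => ?_
  rw [prod_mul_distrib, prod_const, (mem_powersetCard.1 hu).2, mul_comm]

theorem Hnorm_one_add_mul (hm : m ≤ n) (t : ℝ) :
    Hnorm n m (fun i => 1 + t * lam i) =
      ∑ j ∈ range (m + 1), (m.choose j : ℝ) * Hnorm n j lam * t ^ j := by
  rw [Hnorm, esym_one_add_mul, sum_div]
  refine sum_congr rfl fun j hj => ?_
  have hjm : j ≤ m := mem_range_succ_iff.1 hj
  have choose_mul : (n.choose m : ℝ) * m.choose j = n.choose j * (n - j).choose (m - j) :=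
    mod_cast Nat.choose_mul hjm
  have hnm : (n.choose m : ℝ) ≠ 0 := mod_cast (Nat.choose_pos hm).ne'
  have hnj : (n.choose j : ℝ) ≠ 0 := mod_cast (Nat.choose_pos (hjm.trans hm)).ne'
  rw [Hnorm]
  field_simp
  linear_combination -(esym n j lam * t ^ j) * choose_mul

theorem Hnorm_const_one (hm : m ≤ n) : Hnorm n m (fun _ => 1) = 1 := by
  have hnm : (n.choose m : ℝ) ≠ 0 := mod_cast (Nat.choose_pos hm).ne'
  simp [Hnorm, esym, hnm]

theorem contDiff_Hnorm_one_add_mul {r : WithTop ℕ∞} :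
    ContDiff ℝ r fun t => Hnorm n m fun i => 1 + t * lam i := by
  unfold Hnorm esym
  fun_prop

theorem iteratedDeriv_Hnorm_one_add_mul (hm : m ≤ n) (j : ℕ) :
    iteratedDeriv j (fun t => Hnorm n m fun i => 1 + t * lam i) 0 =
      m.descFactorial j * Hnorm n j lam := by
  simp_rw [Hnorm_one_add_mul lam hm]
  rw [iteratedDeriv_fun_sum fun _ _ => by fun_prop]
  simp_rw [iteratedDeriv_const_mul_field, iteratedDeriv_fun_pow_zero]
  simp only [Nat.cast_ite, Nat.cast_zero, mul_ite, mul_zero, sum_ite_eq, mem_range_succ_iff]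
  split_ifs with hjm
  · rw [Nat.descFactorial_eq_factorial_mul_choose, Nat.cast_mul]
    ring
  · simp [Nat.descFactorial_of_lt (not_le.1 hjm)]

theorem deriv_Hnorm_one_add_mul (hm : m ≤ n) :
    deriv (fun t => Hnorm n m fun i => 1 + t * lam i) 0 = m * Hnorm n 1 lam := by
  rw [← iteratedDeriv_one, iteratedDeriv_Hnorm_one_add_mul lam hm, Nat.descFactorial_one]

theorem deriv_deriv_Hnorm_one_add_mul (hm : m ≤ n) :
    deriv (deriv fun t => Hnorm n m fun i => 1 + t * lam i) 0 =
      m * (m - 1) * Hnorm n 2 lam := by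
  rw [← iteratedDeriv_one, ← iteratedDeriv_succ', iteratedDeriv_Hnorm_one_add_mul lam hm,
    Nat.cast_descFactorial_two]

end

theorem deriv_deriv_fun_div {𝕜 𝕜' : Type*} [NontriviallyNormedField 𝕜]
    [NontriviallyNormedField 𝕜'] [NormedAlgebra 𝕜 𝕜'] {f g : 𝕜 → 𝕜'} {x : 𝕜}
    (hf : ∀ᶠ y in 𝓝 x, DifferentiableAt 𝕜 f y) (hf' : DifferentiableAt 𝕜 (deriv f) x)
    (hg : ∀ᶠ y in 𝓝 x, DifferentiableAt 𝕜 g y) (hg' : DifferentiableAt 𝕜 (deriv g) x)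
    (hx : g x ≠ 0) :
    deriv (deriv fun y => f y / g y) x =
      (deriv (deriv f) x * g x ^ 2 - f x * g x * deriv (deriv g) x
        - 2 * deriv f x * deriv g x * g x + 2 * f x * deriv g x ^ 2) / g x ^ 3 := by
  have hfx := hf.self_of_nhds
  have hgx := hg.self_of_nhds
  have hderiv : deriv (fun y => f y / g y) =ᶠ[𝓝 x]
      fun y => (deriv f y * g y - f y * deriv g y) / g y ^ 2 := by
    filter_upwards [hf, hg, hgx.continuousAt.eventually_ne hx] with y hfy hgy hy
    exact deriv_fun_div hfy hgy hy
  rw [hderiv.deriv_eq, deriv_fun_div (d := fun y => g y ^ 2) (by fun_prop) (by fun_prop)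
      (pow_ne_zero 2 hx), deriv_fun_sub (by fun_prop) (by fun_prop), deriv_fun_mul hf' hgx,
    deriv_fun_mul hfx hg', deriv_fun_pow hgx]
  field_simp
  ring

/-- Taylor expansion at `t = 0` of `Q(t) = H_n(𝟙+tλ)/H_{n−k}(𝟙+tλ)`:
`Q(0) = 1`, `Q′(0) = k·H₁(λ)` and
`Q″(0) = k(2n−k−1)·H₂(λ) − 2k(n−k)·H₁(λ)²`; in particular the coefficient of
`H₁(λ)²` in `a₂ = Q″(0)/2` is `−k(n−k)`. -/
theorem quotient_taylor_expansion (n k : ℕ) (hn : 1 ≤ n) (hk1 : 1 ≤ k) (hkn : k ≤ n)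
    (lam : Fin n → ℝ) :
    Qfun n k lam 0 = 1 ∧
    deriv (Qfun n k lam) 0 = (k : ℝ) * Hnorm n 1 lam ∧
    deriv (deriv (Qfun n k lam)) 0 =
      (k : ℝ) * (2 * (n : ℝ) - (k : ℝ) - 1) * Hnorm n 2 lam
        - 2 * (k : ℝ) * ((n : ℝ) - (k : ℝ)) * (Hnorm n 1 lam) ^ 2 := by
  have hm : n - k ≤ n := Nat.sub_le n k
  have hsmooth (m : ℕ) : ContDiff ℝ 2 fun t => Hnorm n m fun i => 1 + t * lam i :=
    contDiff_Hnorm_one_add_mul lam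
  have hdiff (m : ℕ) : Differentiable ℝ fun t => Hnorm n m fun i => 1 + t * lam i :=
    (hsmooth m).differentiable two_ne_zero
  have hone (m : ℕ) (hm : m ≤ n) : Hnorm n m (fun i => 1 + 0 * lam i) = 1 := by
    simpa using Hnorm_const_one hm
  have hne : Hnorm n (n - k) (fun i => 1 + 0 * lam i) ≠ 0 :=
    (hone _ hm).trans_ne one_ne_zero
  unfold Qfun
  refine ⟨?_, ?_, ?_⟩
  · rw [hone n le_rfl, hone _ hm, div_one]
  · rw [deriv_fun_div (hdiff n 0) (hdiff (n - k) 0) hne, hone n le_rfl, hone _ hm,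
      deriv_Hnorm_one_add_mul lam le_rfl, deriv_Hnorm_one_add_mul lam hm, Nat.cast_sub hkn]
    ring
  · rw [deriv_deriv_fun_div (.of_forall (hdiff n)) ((hsmooth n).differentiable_deriv_two 0)
        (.of_forall (hdiff (n - k))) ((hsmooth (n - k)).differentiable_deriv_two 0) hne,
      hone n le_rfl, hone _ hm, deriv_Hnorm_one_add_mul lam le_rfl,
      deriv_Hnorm_one_add_mul lam hm, deriv_deriv_Hnorm_one_add_mul lam le_rfl,
      deriv_deriv_Hnorm_one_add_mul lam hm, Nat.cast_sub hkn]
    ring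
end
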